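/- arXiv:1302.5902 — 2 statements merged into one kernel-verified Lean document; each statement's English description precedes it below -/
import Mathlib

section
/- Let ρ_AB = Σ_j p_j · α_j ⊗ β_j be a separable density matrix on ℂ^{d_A} ⊗ ℂ^{d_B} (a finite convex combination, with p_j ≥ 0, Σ_j p_j = 1, α_j, β_j density matrices) whose reduced state ρ_B = Tr_A ρ_AB is positive definite. Then Tr[ρ̃_AB²] ≤ 1, where ρ̃_AB = (I_A ⊗ ρ_B^{−1/4}) ρ_AB (I_A ⊗ ρ_B^{−1/4}); equivalently, the conditional Rényi 2-entropy H₂(A|B) = −log₂ Tr[ρ̃_AB²] is nonnegative for separable states. -/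
open Matrix BigOperators ComplexOrder Kronecker

noncomputable section

/-- Partial trace over the first (A) tensor factor. -/
def ptraceA {dA dB : ℕ} (ρ : Matrix (Fin dA × Fin dB) (Fin dA × Fin dB) ℂ) :
    Matrix (Fin dB) (Fin dB) ℂ :=
  Matrix.of fun i j => ∑ a : Fin dA, ρ (a, i) (a, j)

/-- `ρ_B^v = Tr_A[(|v⟩⟨v| ⊗ I_B) ρ]`. -/
def condB {dA dB : ℕ} (ρ : Matrix (Fin dA × Fin dB) (Fin dA × Fin dB) ℂ)
    (v : Fin dA → ℂ) : Matrix (Fin dB) (Fin dB) ℂ :=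
  ptraceA (((vecMulVec v (star v)) ⊗ₖ (1 : Matrix (Fin dB) (Fin dB) ℂ)) * ρ)

/-- Real power of a Hermitian matrix, via the spectral decomposition (junk value `0`
on non-Hermitian matrices). -/
def mpow {n : Type*} [Fintype n] [DecidableEq n] (M : Matrix n n ℂ) (r : ℝ) :
    Matrix n n ℂ :=
  if h : M.IsHermitian then
    (h.eigenvectorUnitary : Matrix n n ℂ) *
      Matrix.diagonal (fun i => ((h.eigenvalues i ^ r : ℝ) : ℂ)) *
      star (h.eigenvectorUnitary : Matrix n n ℂ)
  else 0

/-- `ρ̃_AB = (I_A ⊗ ρ_B^{-1/4}) ρ_AB (I_A ⊗ ρ_B^{-1/4})`. -/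
def tildeRho {dA dB : ℕ} (ρ : Matrix (Fin dA × Fin dB) (Fin dA × Fin dB) ℂ) :
    Matrix (Fin dA × Fin dB) (Fin dA × Fin dB) ℂ :=
  ((1 : Matrix (Fin dA) (Fin dA) ℂ) ⊗ₖ mpow (ptraceA ρ) (-(1/4 : ℝ))) * ρ *
    ((1 : Matrix (Fin dA) (Fin dA) ℂ) ⊗ₖ mpow (ptraceA ρ) (-(1/4 : ℝ)))

/-- The pretty-good guessing probability term for a single basis vector `v`:
`Tr[ρ_B^{-1/2} ρ_B^v ρ_B^{-1/2} ρ_B^v]`. -/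
def pgTerm {dA dB : ℕ} (ρ : Matrix (Fin dA × Fin dB) (Fin dA × Fin dB) ℂ)
    (v : Fin dA → ℂ) : ℂ :=
  (mpow (ptraceA ρ) (-(1/2 : ℝ)) * condB ρ v * mpow (ptraceA ρ) (-(1/2 : ℝ)) *
    condB ρ v).trace

end

noncomputable section

/-- The trace of a product of positive semidefinite matrices is nonnegative and at most the product
of the traces. -/
lemma Matrix.PosSemidef.trace_mul_mem_Icc {n : Type*} [Fintype n] [DecidableEq n]
    {A B : Matrix n n ℂ} (hA : A.PosSemidef) (hB : B.PosSemidef) :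
    (A * B).trace ∈ Set.Icc 0 (A.trace * B.trace) := by
  set U : Matrix n n ℂ := (hA.1.eigenvectorUnitary : Matrix n n ℂ) with hU
  have hUU : U * star U = 1 := Unitary.coe_mul_star_self _
  have hC : (star U * B * U).PosSemidef := hB.conjTranspose_mul_mul_same U
  have hCtr : (star U * B * U).trace = B.trace := by
    rw [trace_mul_cycle, hUU, one_mul]
  have hl (i : n) : (0 : ℂ) ≤ hA.1.eigenvalues i := by
    exact_mod_cast hA.eigenvalues_nonneg i
  have htr : (A * B).trace = ∑ i, (hA.1.eigenvalues i : ℂ) * (star U * B * U) i i := by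
    conv_lhs => rw [hA.1.spectral_theorem, Unitary.conjStarAlgAut_apply, ← hU, trace_mul_comm,
      ← mul_assoc, ← mul_assoc, trace_mul_comm, ← mul_assoc, ← mul_assoc, trace_mul_comm]
    simp [trace, diagonal_mul]
  refine ⟨?_, ?_⟩
  · rw [htr]
    exact Finset.sum_nonneg fun i _ => mul_nonneg (hl i) hC.diag_nonneg
  · rw [htr, ← hCtr, hA.1.trace_eq_sum_eigenvalues, Finset.sum_mul]
    refine Finset.sum_le_sum fun i _ => mul_le_mul_of_nonneg_left ?_ (hl i)
    exact Finset.single_le_sum (f := fun i => (star U * B * U) i i)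
      (fun j _ => hC.diag_nonneg) (Finset.mem_univ i)

lemma mpow_isHermitian {n : Type*} [Fintype n] [DecidableEq n] (M : Matrix n n ℂ) (r : ℝ) :
    (mpow M r).IsHermitian := by
  unfold mpow
  split_ifs with h
  · refine isHermitian_mul_mul_conjTranspose _ ?_
    exact isHermitian_diagonal_of_self_adjoint _ (by ext i; simp)
  · exact isHermitian_zero

lemma mpow_add {n : Type*} [Fintype n] [DecidableEq n] {M : Matrix n n ℂ} (hM : M.PosDef)
    (r s : ℝ) : mpow M r * mpow M s = mpow M (r + s) := by
  simp only [mpow, dif_pos hM.1]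
  set U : Matrix n n ℂ := (hM.1.eigenvectorUnitary : Matrix n n ℂ)
  have hUU : star U * U = 1 := Unitary.coe_star_mul_self _
  rw [show ∀ D E : Matrix n n ℂ, U * D * star U * (U * E * star U) =
      U * D * (star U * U) * E * star U from fun D E => by simp only [mul_assoc], hUU, mul_one,
    mul_assoc U, diagonal_mul_diagonal]
  simp only [← Complex.ofReal_mul, ← Real.rpow_add (hM.eigenvalues_pos _)]

lemma mpow_one {n : Type*} [Fintype n] [DecidableEq n] {M : Matrix n n ℂ} (hM : M.IsHermitian) :
    mpow M 1 = M := by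
  conv_rhs => rw [hM.spectral_theorem, Unitary.conjStarAlgAut_apply]
  simp only [mpow, dif_pos hM, Real.rpow_one]
  rfl

/-- Sandwiching `M` between two copies of `M ^ (-1/4)` gives a square root of `M`. -/
lemma mpow_neg_quarter_sandwich_sq {n : Type*} [Fintype n] [DecidableEq n] {M : Matrix n n ℂ}
    (hM : M.PosDef) :
    (mpow M (-(1/4)) * M * mpow M (-(1/4))) * (mpow M (-(1/4)) * M * mpow M (-(1/4))) = M := by
  have h : mpow M (-(1/4)) * M * mpow M (-(1/4)) = mpow M (1/2) := by
    nth_rewrite 2 [← mpow_one hM.1]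
    rw [mpow_add hM, mpow_add hM]
    norm_num
  rw [h, mpow_add hM, add_halves, mpow_one hM.1]

lemma ptraceA_sum_smul_kronecker {dA dB : ℕ} {J : Type*} [Fintype J] (c : J → ℂ)
    (α : J → Matrix (Fin dA) (Fin dA) ℂ) (β : J → Matrix (Fin dB) (Fin dB) ℂ) :
    ptraceA (∑ j, c j • (α j ⊗ₖ β j)) = ∑ j, (c j * (α j).trace) • β j := by
  ext i k
  simp only [ptraceA, of_apply, Matrix.sum_apply, Matrix.smul_apply, kroneckerMap_apply, smul_eq_mul]
  rw [Finset.sum_comm]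
  simp only [trace, diag_apply, Finset.mul_sum, Finset.sum_mul, mul_assoc]

lemma trace_mul_self_sum_smul_kronecker {m n J : Type*} [Fintype m] [Fintype n] [Fintype J]
    (c : J → ℂ) (α : J → Matrix m m ℂ) (γ : J → Matrix n n ℂ) :
    ((∑ j, c j • (α j ⊗ₖ γ j)) * ∑ j, c j • (α j ⊗ₖ γ j)).trace =
      ∑ j, ∑ k, c j * c k * ((α j * α k).trace * (γ j * γ k).trace) := by
  simp only [Finset.sum_mul_sum, trace_sum, smul_mul_smul_comm, trace_smul, ← mul_kronecker_mul,
    trace_kronecker, smul_eq_mul]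

/-- for a separable density matrix `ρ_AB = Σ_j p_j α_j ⊗ β_j` with
`ρ_B` positive definite, `Tr[ρ̃_AB²] ≤ 1`, i.e. the conditional Rényi 2-entropy
`H₂(A|B) = −log₂ Tr[ρ̃_AB²]` is nonnegative. -/
theorem separable_h2_nonneg
    (dA dB : ℕ) (hdA : 1 ≤ dA) (hdB : 1 ≤ dB)
    (J : Type) [Fintype J]
    (p : J → ℝ) (hp : ∀ j, 0 ≤ p j) (hpsum : ∑ j, p j = 1)
    (α : J → Matrix (Fin dA) (Fin dA) ℂ)
    (hα : ∀ j, (α j).PosSemidef) (hαtr : ∀ j, (α j).trace = 1)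
    (β : J → Matrix (Fin dB) (Fin dB) ℂ)
    (hβ : ∀ j, (β j).PosSemidef) (hβtr : ∀ j, (β j).trace = 1)
    (ρ : Matrix (Fin dA × Fin dB) (Fin dA × Fin dB) ℂ)
    (hρ : ρ = ∑ j, ((p j : ℂ)) • ((α j) ⊗ₖ (β j)))
    (hρB : (ptraceA ρ).PosDef) :
    ((tildeRho ρ * tildeRho ρ).trace).re ≤ 1 := by
  set Q := mpow (ptraceA ρ) (-(1/4 : ℝ)) with hQ
  have hB : ptraceA ρ = ∑ j, (p j : ℂ) • β j := by
    rw [hρ, ptraceA_sum_smul_kronecker]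
    simp [hαtr]
  have hBtr : (ptraceA ρ).trace = 1 := by
    rw [hB]
    simp only [trace_sum, trace_smul, hβtr, smul_eq_mul, mul_one]
    exact_mod_cast hpsum
  have hγ (j : J) : (Q * β j * Q).PosSemidef := by
    simpa only [(mpow_isHermitian (ptraceA ρ) (-(1/4 : ℝ))).eq] using
      (hβ j).mul_mul_conjTranspose_same (mpow (ptraceA ρ) (-(1/4 : ℝ)))
  have htilde : tildeRho ρ = ∑ j, (p j : ℂ) • (α j ⊗ₖ (Q * β j * Q)) := by
    rw [tildeRho, ← hQ, hρ]
    simp only [Finset.mul_sum, Finset.sum_mul, mul_smul_comm, smul_mul_assoc,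
      ← mul_kronecker_mul, one_mul, mul_one]
  have hsandwich : Q * ptraceA ρ * Q = ∑ j, (p j : ℂ) • (Q * β j * Q) := by
    rw [hB]
    simp only [Finset.mul_sum, Finset.sum_mul, mul_smul_comm, smul_mul_assoc]
  have hone : ∑ j, ∑ k, (p j : ℂ) * p k * ((Q * β j * Q) * (Q * β k * Q)).trace = 1 := by
    rw [← hBtr, ← mpow_neg_quarter_sandwich_sq hρB, ← hQ, hsandwich]
    simp only [Finset.sum_mul_sum, trace_sum, smul_mul_smul_comm, trace_smul, smul_eq_mul]
  have hle : (tildeRho ρ * tildeRho ρ).trace ≤ 1 := by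
    rw [htilde, trace_mul_self_sum_smul_kronecker, ← hone]
    refine Finset.sum_le_sum fun j _ => Finset.sum_le_sum fun k _ => ?_
    have hpp : (0 : ℂ) ≤ (p j : ℂ) * p k := by exact_mod_cast mul_nonneg (hp j) (hp k)
    refine mul_le_mul_of_nonneg_left
      (mul_le_of_le_one_left ((hγ j).trace_mul_mem_Icc (hγ k)).1 ?_) hpp
    simpa [hαtr] using ((hα j).trace_mul_mem_Icc (hα k)).2
  exact (Complex.le_def.1 hle).1

end
end

section
/- Let {U_θ}_{θ∈Θ} be a finite family of d_A × d_A unitary matrices forming a unitary 2-design (for every matrix X on ℂ^{d_A} ⊗ ℂ^{d_A}, (1/|Θ|) Σ_θ (U_θ ⊗ U_θ) X (U_θ ⊗ U_θ)† equals the Haar average ∫_{U(d_A)} (U ⊗ U) X (U ⊗ U)† dU). Let ρ_AB be a density matrix on ℂ^{d_A} ⊗ ℂ^{d_B} with ρ_B positive definite, and for |θ_k⟩ := U_θ|k⟩ (standard basis {|k⟩}) set ρ_B^{θ_k} = Tr_A[(|θ_k⟩⟨θ_k| ⊗ I_B) ρ_AB]. Then (1/|Θ|) · Σ_{θ∈Θ}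 Σ_{k=1}^{d_A} Tr[ρ_B^{−1/2} ρ_B^{θ_k} ρ_B^{−1/2} ρ_B^{θ_k}] = (1 + Tr[ρ̃_AB²])/(d_A+1); equivalently H₂(K|BΘ) = log₂(d_A+1) − log₂(2^{−H₂(A|B)} + 1). -/
open Matrix BigOperators ComplexOrder Kronecker

open MeasureTheory

noncomputable section

noncomputable instance (d : ℕ) : MeasurableSpace (Matrix.unitaryGroup (Fin d) ℂ) :=
  borel _

instance (d : ℕ) : BorelSpace (Matrix.unitaryGroup (Fin d) ℂ) := ⟨rfl⟩

/-- The Householder reflection taking the basis vector `a` to `(3/5) a + (4/5) b`. -/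
theorem exists_unitary_row_eq {n : Type*} [Fintype n] [DecidableEq n] {a b : n} (hab : a ≠ b) :
    ∃ W ∈ unitaryGroup n ℂ,
      ∀ j, W a j = (if j = a then 3 / 5 else 0) + (if j = b then 4 / 5 else 0) := by
  set v : n → ℂ := Pi.single a 1 - Pi.single b 2 with hv
  have hstar : star v = v := by
    ext j
    simp only [hv, Pi.star_apply, Pi.sub_apply, Pi.single_apply]
    split_ifs <;> simp
  have hdot : v ⬝ᵥ v = 5 := by
    simp [hv, hab, hab.symm]
    norm_num
  refine ⟨1 - (2 / 5 : ℂ) • vecMulVec v v, ?_, fun j => ?_⟩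
  · rw [mem_unitaryGroup_iff]
    have hs : star (1 - (2 / 5 : ℂ) • vecMulVec v v) = 1 - (2 / 5 : ℂ) • vecMulVec v v := by
      rw [star_eq_conjTranspose, conjTranspose_sub, conjTranspose_smul, conjTranspose_vecMulVec,
        hstar]
      simp
    rw [hs]
    have hvv : vecMulVec v v * vecMulVec v v = (5 : ℂ) • vecMulVec v v := by
      rw [vecMulVec_mul_vecMulVec, hdot, vecMulVec_smul]
    simp only [mul_sub, sub_mul, one_mul, mul_one, smul_mul_smul_comm, hvv]
    module
  · by_cases hja : j = a
    · subst hja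
      simp [hv, vecMulVec_apply, hab]
      norm_num
    · by_cases hjb : j = b
      · subst hjb
        simp [hv, vecMulVec_apply, hab, hab.symm]
        norm_num
      · simp [hv, vecMulVec_apply, hab, hja, hjb, Ne.symm hja]

section TwofoldTwirl

variable {n : Type*} [Fintype n] [DecidableEq n] {M : Matrix (n × n) (n × n) ℂ}

theorem apply_eq_of_diagonal_twirl (hM : ∀ W ∈ unitaryGroup n ℂ, (W ⊗ₖ W) * M * (W ⊗ₖ W)ᴴ = M)
    (w : n → ℂ) (hw : ∀ i, w i * star (w i) = 1) (a b c e : n) :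
    w a * w b * M (a, b) (c, e) * (star (w c) * star (w e)) = M (a, b) (c, e) := by
  have hd : diagonal w ∈ unitaryGroup n ℂ := by
    rw [mem_unitaryGroup_iff, star_eq_conjTranspose, diagonal_conjTranspose, diagonal_mul_diagonal]
    simp only [Pi.star_apply, hw, diagonal_one]
  have h := congrFun (congrFun (hM _ hd) (a, b)) (c, e)
  rw [diagonal_kronecker_diagonal, diagonal_conjTranspose, mul_diagonal, diagonal_mul] at h
  simpa using h

theorem apply_eq_zero_of_ne_of_ne
    (hM : ∀ W ∈ unitaryGroup n ℂ, (W ⊗ₖ W) * M * (W ⊗ₖ W)ᴴ = M)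
    {a b c e : n} (hc : c ≠ a) (he : e ≠ a) : M (a, b) (c, e) = 0 := by
  have h := apply_eq_of_diagonal_twirl hM (fun i => if i = a then Complex.I else 1)
    (fun i => by split_ifs <;> simp) a b c e
  simp only [hc, he, if_true, if_false, star_one, mul_one] at h
  split_ifs at h
  · rw [Complex.I_mul_I] at h
    linear_combination (-1 / 2) * h
  · have : (Complex.I - 1) * M (a, b) (c, e) = 0 := by linear_combination h
    refine (mul_eq_zero.1 this).resolve_left fun h0 => ?_
    simpa using congrArg Complex.im h0

theorem apply_eq_zero_of_snd_ne
    (hM : ∀ W ∈ unitaryGroup n ℂ, (W ⊗ₖ W) * M * (W ⊗ₖ W)ᴴ = M)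
    {a b e : n} (he : e ≠ b) : M (a, b) (a, e) = 0 := by
  have hw : ∀ i, (if i = b then Complex.I else 1) * star (if i = b then Complex.I else 1) = 1 :=
    fun i => by split_ifs <;> simp
  have h := apply_eq_of_diagonal_twirl hM (fun i => if i = b then Complex.I else 1) hw a b a e
  have ha := hw a
  simp only [he, if_true, if_false, star_one, mul_one] at h
  have h' : (Complex.I - 1) * M (a, b) (a, e) = 0 := by
    linear_combination h - Complex.I * M (a, b) (a, e) * ha
  refine (mul_eq_zero.1 h').resolve_left fun h0 => ?_
  simpa using congrArg Complex.im h0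

theorem twirl_invariant_rotation_relation
    (hM : ∀ W ∈ unitaryGroup n ℂ, (W ⊗ₖ W) * M * (W ⊗ₖ W)ᴴ = M)
    (hl : ∀ a b q, M (a, b) q = M (b, a) q) (hr : ∀ p a b, M p (a, b) = M p (b, a))
    {a b : n} (hab : a ≠ b) :
    625 * M (a, a) (a, a) =
      81 * M (a, a) (a, a) + 256 * M (b, b) (b, b) + 576 * M (a, b) (a, b) := by
  obtain ⟨W, hW, hrow⟩ := exists_unitary_row_eq hab
  have h := congrFun (congrFun (hM W hW) (a, a)) (a, a)
  simp only [mul_apply, conjTranspose_apply, kronecker_apply, hrow, Fintype.sum_prod_type,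
    add_mul, mul_add, ite_mul, mul_ite, zero_mul, mul_zero, star_add, star_mul',
    apply_ite star, star_zero, Finset.sum_add_distrib, Finset.sum_ite_eq', Finset.mem_univ,
    if_true] at h
  have z1 : M (a, a) (b, b) = 0 := apply_eq_zero_of_ne_of_ne hM hab.symm hab.symm
  have z2 : M (b, b) (a, a) = 0 := apply_eq_zero_of_ne_of_ne hM hab hab
  have z3 : M (a, a) (a, b) = 0 := apply_eq_zero_of_snd_ne hM hab.symm
  have z4 : M (b, b) (b, a) = 0 := apply_eq_zero_of_snd_ne hM hab
  have z5 : M (a, b) (a, a) = 0 := apply_eq_zero_of_snd_ne hM hab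
  have z6 : M (b, a) (b, b) = 0 := apply_eq_zero_of_snd_ne hM hab.symm
  simp only [hl b a, hr _ b a] at h z4 z6
  simp [z1, z2, z3, z4, z5, z6] at h
  linear_combination -625 * h

/-- A matrix commuting with all `W ⊗ W` and supported on the symmetric subspace is a multiple of
the symmetrizer. -/
theorem eq_symmetrizer_of_twirl_invariant
    (hM : ∀ W ∈ unitaryGroup n ℂ, (W ⊗ₖ W) * M * (W ⊗ₖ W)ᴴ = M)
    (hl : ∀ a b q, M (a, b) q = M (b, a) q) (hr : ∀ p a b, M p (a, b) = M p (b, a))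
    (htr : M.trace = Fintype.card n) (a b c e : n) :
    M (a, b) (c, e) = ((if a = c ∧ b = e then 1 else 0) + (if a = e ∧ b = c then 1 else 0)) /
      (Fintype.card n + 1 : ℂ) := by
  have hdiag : ∀ x y, M (x, x) (x, x) = M (y, y) (y, y) := fun x y => by
    rcases eq_or_ne x y with rfl | hxy
    · rfl
    · have h1 := twirl_invariant_rotation_relation hM hl hr hxy
      have h2 := twirl_invariant_rotation_relation hM hl hr hxy.symm
      rw [hl y x, hr _ y x] at h2
      linear_combination (h1 - h2) / 800
  have hoff : ∀ x y, x ≠ y → M (x, y) (x, y) = M (a, a) (a, a) / 2 := fun x y hxy => by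
    have h1 := twirl_invariant_rotation_relation hM hl hr hxy
    rw [hdiag y a, hdiag x a] at h1
    linear_combination -h1 / 576
  have hd : (Fintype.card n : ℂ) ≠ 0 := by
    have : Nonempty n := ⟨a⟩
    exact_mod_cast Fintype.card_ne_zero
  have hd1 : (Fintype.card n + 1 : ℂ) ≠ 0 := by exact_mod_cast Nat.succ_ne_zero (Fintype.card n)
  have hentry : ∀ x y, M (x, y) (x, y) =
      M (a, a) (a, a) / 2 + if x = y then M (a, a) (a, a) / 2 else 0 := fun x y => by
    split_ifs with h
    · subst h
      rw [hdiag x a]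
      ring
    · rw [hoff x y h, add_zero]
  have hα : M (a, a) (a, a) = 2 / (Fintype.card n + 1 : ℂ) := by
    simp only [trace, diag_apply, Fintype.sum_prod_type] at htr
    rw [Finset.sum_congr rfl fun x _ => Finset.sum_congr rfl fun y _ => hentry x y] at htr
    simp only [Finset.sum_add_distrib,
      Finset.sum_ite_eq, Finset.mem_univ, if_true, Finset.sum_const, Finset.card_univ,
      nsmul_eq_mul] at htr
    rw [eq_div_iff hd1]
    apply mul_left_cancel₀ hd
    linear_combination 2 * htr
  have key : ∀ y z, M (a, y) (a, z) =
      ((if y = z then 1 else 0) + (if a = z ∧ y = a then 1 else 0)) /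
        (Fintype.card n + 1 : ℂ) := fun y z => by
    by_cases hyz : y = z
    · subst hyz
      rw [hentry, hα]
      by_cases hay : a = y
      · subst hay
        simp
        ring
      · simp [hay]
        ring
    · rw [apply_eq_zero_of_snd_ne hM (Ne.symm hyz), if_neg hyz, if_neg (by grind)]
      simp
  by_cases hac : a = c
  · subst hac
    rw [key]
    simp
  · by_cases hae : a = e
    · subst hae
      rw [hr, key]
      simp [hac]
    · rw [apply_eq_zero_of_ne_of_ne hM (Ne.symm hac) (Ne.symm hae)]
      simp [hac, hae]

end TwofoldTwirl

section HaarAverage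

variable {d : ℕ}

theorem continuous_twirl_apply (X : Matrix (Fin d × Fin d) (Fin d × Fin d) ℂ)
    (p q : Fin d × Fin d) :
    Continuous fun V : unitaryGroup (Fin d) ℂ =>
      (((V : Matrix (Fin d) (Fin d) ℂ) ⊗ₖ (V : Matrix (Fin d) (Fin d) ℂ)) * X *
        ((V : Matrix (Fin d) (Fin d) ℂ) ⊗ₖ (V : Matrix (Fin d) (Fin d) ℂ))ᴴ) p q := by
  have hentry : ∀ i j, Continuous fun V : unitaryGroup (Fin d) ℂ =>
      (V : Matrix (Fin d) (Fin d) ℂ) i j := fun i j =>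
    continuous_subtype_val.matrix_elem i j
  have hk : Continuous fun V : unitaryGroup (Fin d) ℂ =>
      (V : Matrix (Fin d) (Fin d) ℂ) ⊗ₖ (V : Matrix (Fin d) (Fin d) ℂ) :=
    continuous_matrix fun i j => (hentry _ _).mul (hentry _ _)
  exact ((hk.matrix_mul continuous_const).matrix_mul hk.matrix_conjTranspose).matrix_elem p q

theorem compactSpace_unitaryGroup : CompactSpace (unitaryGroup (Fin d) ℂ) := by
  suffices h : IsCompact (unitaryGroup (Fin d) ℂ : Set (Matrix (Fin d) (Fin d) ℂ)) from
    isCompact_iff_compactSpace.1 h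
  have hK : IsCompact (Set.univ.pi fun _ : Fin d => Set.univ.pi fun _ : Fin d =>
      Metric.closedBall (0 : ℂ) 1) :=
    isCompact_univ_pi fun _ => isCompact_univ_pi fun _ => isCompact_closedBall _ _
  refine hK.of_isClosed_subset ?_ fun V hV i _ j _ => ?_
  · exact isClosed_unitary (R := Matrix (Fin d) (Fin d) ℂ)
  · simpa using entry_norm_bound_of_unitary hV i j

variable {μ : Measure (unitaryGroup (Fin d) ℂ)} [IsProbabilityMeasure μ]

theorem integrable_twirl_apply (X : Matrix (Fin d × Fin d) (Fin d × Fin d) ℂ)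
    (p q : Fin d × Fin d) :
    Integrable (fun V : unitaryGroup (Fin d) ℂ =>
      (((V : Matrix (Fin d) (Fin d) ℂ) ⊗ₖ (V : Matrix (Fin d) (Fin d) ℂ)) * X *
        ((V : Matrix (Fin d) (Fin d) ℂ) ⊗ₖ (V : Matrix (Fin d) (Fin d) ℂ))ᴴ) p q) μ :=
  have := compactSpace_unitaryGroup (d := d)
  (continuous_twirl_apply X p q).integrable_of_hasCompactSupport (.of_compactSpace _)

theorem haar_twirl_invariant (hμ : ∀ V : unitaryGroup (Fin d) ℂ, μ.map (fun U => V * U) = μ)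
    (X : Matrix (Fin d × Fin d) (Fin d × Fin d) ℂ)
    (W : Matrix (Fin d) (Fin d) ℂ) (hW : W ∈ unitaryGroup (Fin d) ℂ) :
    (W ⊗ₖ W) * (of fun p q => ∫ V : unitaryGroup (Fin d) ℂ,
      (((V : Matrix (Fin d) (Fin d) ℂ) ⊗ₖ (V : Matrix (Fin d) (Fin d) ℂ)) * X *
        ((V : Matrix (Fin d) (Fin d) ℂ) ⊗ₖ (V : Matrix (Fin d) (Fin d) ℂ))ᴴ) p q ∂μ) *
      (W ⊗ₖ W)ᴴ = of fun p q => ∫ V : unitaryGroup (Fin d) ℂ,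
      (((V : Matrix (Fin d) (Fin d) ℂ) ⊗ₖ (V : Matrix (Fin d) (Fin d) ℂ)) * X *
        ((V : Matrix (Fin d) (Fin d) ℂ) ⊗ₖ (V : Matrix (Fin d) (Fin d) ℂ))ᴴ) p q ∂μ := by
  set F : unitaryGroup (Fin d) ℂ → Matrix (Fin d × Fin d) (Fin d × Fin d) ℂ := fun V =>
    ((V : Matrix (Fin d) (Fin d) ℂ) ⊗ₖ (V : Matrix (Fin d) (Fin d) ℂ)) * X *
      ((V : Matrix (Fin d) (Fin d) ℂ) ⊗ₖ (V : Matrix (Fin d) (Fin d) ℂ))ᴴ with hF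
  have hint : ∀ p q, Integrable (fun V => F V p q) μ := integrable_twirl_apply X
  have hmul : ∀ V, F (⟨W, hW⟩ * V) = (W ⊗ₖ W) * F V * (W ⊗ₖ W)ᴴ := fun V => by
    simp only [hF, Submonoid.coe_mul, mul_kronecker_mul, conjTranspose_mul, Matrix.mul_assoc]
  ext p q
  have hshift : ∫ V, F V p q ∂μ = ∫ V, F (⟨W, hW⟩ * V) p q ∂μ := by
    conv_lhs => rw [← hμ ⟨W, hW⟩]
    refine integral_map (continuous_const_mul _).measurable.aemeasurable ?_
    rw [hμ]
    exact (hint p q).aestronglyMeasurable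
  change _ = ∫ V, F V p q ∂μ
  rw [hshift]
  simp only [hmul, mul_apply (M := _ * _), mul_apply (M := W ⊗ₖ W), Finset.sum_mul, of_apply]
  rw [integral_finsetSum _ fun i _ => integrable_finsetSum _ fun j _ =>
    ((hint j i).const_mul _).mul_const _]
  refine Finset.sum_congr rfl fun i _ => ?_
  rw [integral_finsetSum _ fun j _ => ((hint j i).const_mul _).mul_const _]
  refine Finset.sum_congr rfl fun j _ => ?_
  rw [integral_mul_const, integral_const_mul]
  simp only [hF, mul_apply]

end HaarAverage

section MatrixPower

variable {n : Type*} [Fintype n] [DecidableEq n] {M : Matrix n n ℂ}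

theorem mpow_mul_mpow (hM : M.PosDef) (r s : ℝ) : mpow M r * mpow M s = mpow M (r + s) := by
  have h := hM.isHermitian
  have hU : star (h.eigenvectorUnitary : Matrix n n ℂ) * (h.eigenvectorUnitary : Matrix n n ℂ) = 1 :=
    Unitary.coe_star_mul_self _
  simp only [mpow, dif_pos h]
  calc _ = (h.eigenvectorUnitary : Matrix n n ℂ) *
        (diagonal (fun i => ((h.eigenvalues i ^ r : ℝ) : ℂ)) *
        (star (h.eigenvectorUnitary : Matrix n n ℂ) * (h.eigenvectorUnitary : Matrix n n ℂ)) *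
        diagonal (fun i => ((h.eigenvalues i ^ s : ℝ) : ℂ))) *
        star (h.eigenvectorUnitary : Matrix n n ℂ) := by simp only [Matrix.mul_assoc]
    _ = _ := by
      rw [hU, Matrix.mul_one, diagonal_mul_diagonal]
      simp only [← Complex.ofReal_mul, ← Real.rpow_add (hM.eigenvalues_pos _)]

theorem mpow_one_s15 (h : M.IsHermitian) : mpow M 1 = M := by
  conv_rhs => rw [h.spectral_theorem]
  simp only [mpow, dif_pos h, Real.rpow_one]
  rfl

theorem mpow_zero (h : M.IsHermitian) : mpow M 0 = 1 := by
  simp only [mpow, dif_pos h, Real.rpow_zero, Complex.ofReal_one, diagonal_one, Matrix.mul_one]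
  exact Unitary.coe_mul_star_self _

theorem mpow_neg_half_sandwich (hM : M.PosDef) :
    mpow M (-(1 / 2)) * M * mpow M (-(1 / 2)) = 1 := by
  have h : mpow M (-(1 / 2)) * mpow M 1 * mpow M (-(1 / 2)) = 1 := by
    rw [mpow_mul_mpow hM, mpow_mul_mpow hM, ← mpow_zero hM.isHermitian]
    norm_num
  rwa [mpow_one_s15 hM.isHermitian] at h

end MatrixPower

section Blocks

variable {dA dB : ℕ} (ρ : Matrix (Fin dA × Fin dB) (Fin dA × Fin dB) ℂ)

/-- The `(a, c)` block of an operator on the tensor product. -/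
def blockB (a c : Fin dA) : Matrix (Fin dB) (Fin dB) ℂ :=
  ρ.submatrix (Prod.mk a) (Prod.mk c)

theorem ptraceA_eq_sum_blockB : ptraceA ρ = ∑ a, blockB ρ a a := by
  ext i j
  simp [ptraceA, blockB, Matrix.sum_apply]

theorem condB_eq_sum_blockB (v : Fin dA → ℂ) :
    condB ρ v = ∑ x : Fin dA × Fin dA, (v x.1 * star (v x.2)) • blockB ρ x.2 x.1 := by
  ext i j
  simp [condB, ptraceA, blockB, Matrix.sum_apply, mul_apply, Fintype.sum_prod_type, one_apply,
    vecMulVec_apply]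

theorem pgTerm_eq_sum (v : Fin dA → ℂ) :
    pgTerm ρ v = ∑ x : Fin dA × Fin dA, ∑ y : Fin dA × Fin dA,
      (v x.1 * v y.1 * (star (v x.2) * star (v y.2))) *
        (mpow (ptraceA ρ) (-(1 / 2)) * blockB ρ x.2 x.1 * mpow (ptraceA ρ) (-(1 / 2)) *
          blockB ρ y.2 y.1).trace := by
  rw [pgTerm, condB_eq_sum_blockB]
  simp only [Matrix.sum_mul, trace_sum, Matrix.mul_smul, Matrix.smul_mul,
    trace_smul, smul_eq_mul, Finset.mul_sum]
  rw [Finset.sum_comm]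
  refine Finset.sum_congr rfl fun x _ => Finset.sum_congr rfl fun y _ => ?_
  ring

theorem trace_mul_eq_sum_blockB (σ : Matrix (Fin dA × Fin dB) (Fin dA × Fin dB) ℂ) :
    (ρ * σ).trace = ∑ a, ∑ b, (blockB ρ a b * blockB σ b a).trace := by
  simp only [trace, diag_apply, mul_apply, Fintype.sum_prod_type, blockB, submatrix_apply]
  exact Finset.sum_congr rfl fun a _ => Finset.sum_comm

theorem blockB_one_kronecker_mul (S : Matrix (Fin dB) (Fin dB) ℂ) (a b : Fin dA) :
    blockB (((1 : Matrix (Fin dA) (Fin dA) ℂ) ⊗ₖ S) * ρ) a b = S * blockB ρ a b := by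
  ext i j
  simp [blockB, mul_apply, Fintype.sum_prod_type, one_apply]

theorem trace_tildeRho_mul_self (hρB : (ptraceA ρ).PosDef) :
    (tildeRho ρ * tildeRho ρ).trace = ∑ a, ∑ b,
      (mpow (ptraceA ρ) (-(1 / 2)) * blockB ρ b a * mpow (ptraceA ρ) (-(1 / 2)) *
        blockB ρ a b).trace := by
  set Q := (1 : Matrix (Fin dA) (Fin dA) ℂ) ⊗ₖ mpow (ptraceA ρ) (-(1 / 4 : ℝ)) with hQ
  have hQQ : Q * Q = (1 : Matrix (Fin dA) (Fin dA) ℂ) ⊗ₖ mpow (ptraceA ρ) (-(1 / 2 : ℝ)) := by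
    rw [hQ, ← mul_kronecker_mul, mpow_mul_mpow hρB, Matrix.one_mul]
    norm_num
  have h : (tildeRho ρ * tildeRho ρ).trace = ((Q * Q * ρ) * (Q * Q * ρ)).trace := by
    rw [tildeRho, ← hQ]
    calc _ = ((Q * ρ * Q * Q * ρ) * Q).trace := by simp only [Matrix.mul_assoc]
      _ = _ := by
        rw [trace_mul_comm]
        simp only [Matrix.mul_assoc]
  rw [h, hQQ, trace_mul_eq_sum_blockB, Finset.sum_comm]
  simp only [blockB_one_kronecker_mul, Matrix.mul_assoc]

end Blocks

/-- uncertainty equality for measurements in the bases `{U_θ|k⟩}_k`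
coming from a unitary 2-design `{U_θ}` (twofold twirl = Haar average w.r.t. the Haar
probability measure `μ` on `U(d)`, characterized as a left-invariant Borel probability
measure): `(1/|Θ|) Σ_{θ,k} Tr[ρ_B^{-1/2} ρ_B^{θ_k} ρ_B^{-1/2} ρ_B^{θ_k}]
= (1 + Tr[ρ̃_AB²])/(d_A+1)`, i.e. `H₂(K|BΘ) = log₂(d_A+1) − log₂(2^{−H₂(A|B)} + 1)`. -/
theorem uncertainty_equality_unitary_design
    (dA dB : ℕ) (hdA : 1 ≤ dA) (hdB : 1 ≤ dB)
    (μ : Measure (Matrix.unitaryGroup (Fin dA) ℂ)) [IsProbabilityMeasure μ]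
    (hμinv : ∀ V : Matrix.unitaryGroup (Fin dA) ℂ,
      μ.map (fun U => V * U) = μ)
    (Θ : Type) [Fintype Θ] [Nonempty Θ]
    (U : Θ → Matrix.unitaryGroup (Fin dA) ℂ)
    (hdesign : ∀ (X : Matrix (Fin dA × Fin dA) (Fin dA × Fin dA) ℂ) (p q : Fin dA × Fin dA),
      ((Fintype.card Θ : ℂ))⁻¹ *
          (∑ θ, (((U θ : Matrix (Fin dA) (Fin dA) ℂ) ⊗ₖ (U θ : Matrix (Fin dA) (Fin dA) ℂ)) * X *
            (((U θ : Matrix (Fin dA) (Fin dA) ℂ) ⊗ₖ (U θ : Matrix (Fin dA) (Fin dA) ℂ))ᴴ)) p q)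
        = ∫ V : Matrix.unitaryGroup (Fin dA) ℂ,
            (((V : Matrix (Fin dA) (Fin dA) ℂ) ⊗ₖ (V : Matrix (Fin dA) (Fin dA) ℂ)) * X *
              (((V : Matrix (Fin dA) (Fin dA) ℂ) ⊗ₖ (V : Matrix (Fin dA) (Fin dA) ℂ))ᴴ)) p q ∂μ)
    (ρ : Matrix (Fin dA × Fin dB) (Fin dA × Fin dB) ℂ)
    (hρ : ρ.PosSemidef) (hρtr : ρ.trace = 1)
    (hρB : (ptraceA ρ).PosDef) :
    ((Fintype.card Θ : ℂ))⁻¹ *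
        ∑ θ, ∑ k : Fin dA,
          pgTerm ρ (fun a => (U θ : Matrix (Fin dA) (Fin dA) ℂ) a k)
      = (1 + (tildeRho ρ * tildeRho ρ).trace) / (dA + 1 : ℂ) := by
  set X : Matrix (Fin dA × Fin dA) (Fin dA × Fin dA) ℂ :=
    diagonal fun p => if p.1 = p.2 then 1 else 0 with hX
  set M : Matrix (Fin dA × Fin dA) (Fin dA × Fin dA) ℂ := of fun p q =>
    (Fintype.card Θ : ℂ)⁻¹ * ∑ θ, ∑ k, (U θ : Matrix (Fin dA) (Fin dA) ℂ) p.1 k *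
      (U θ : Matrix (Fin dA) (Fin dA) ℂ) p.2 k *
      (star ((U θ : Matrix (Fin dA) (Fin dA) ℂ) q.1 k) *
        star ((U θ : Matrix (Fin dA) (Fin dA) ℂ) q.2 k)) with hMdef
  have hcard : (Fintype.card Θ : ℂ) ≠ 0 := by exact_mod_cast Fintype.card_ne_zero
  have hMint : M = of fun p q => ∫ V : Matrix.unitaryGroup (Fin dA) ℂ,
      (((V : Matrix (Fin dA) (Fin dA) ℂ) ⊗ₖ (V : Matrix (Fin dA) (Fin dA) ℂ)) * X *
        (((V : Matrix (Fin dA) (Fin dA) ℂ) ⊗ₖ (V : Matrix (Fin dA) (Fin dA) ℂ))ᴴ)) p q ∂μ := by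
    ext p q
    rw [hMdef, of_apply, of_apply, ← hdesign X p q]
    congr 1
    refine Finset.sum_congr rfl fun θ _ => ?_
    rw [hX, mul_apply]
    simp [mul_diagonal, Fintype.sum_prod_type, mul_comm]
  have hMinv : ∀ W ∈ unitaryGroup (Fin dA) ℂ, (W ⊗ₖ W) * M * (W ⊗ₖ W)ᴴ = M := by
    rw [hMint]
    exact haar_twirl_invariant hμinv X
  have hl : ∀ a b q, M (a, b) q = M (b, a) q := fun a b q => by
    simp only [hMdef, of_apply, mul_comm ((U _ : Matrix (Fin dA) (Fin dA) ℂ) a _)]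
  have hr : ∀ p a b, M p (a, b) = M p (b, a) := fun p a b => by
    simp only [hMdef, of_apply, mul_comm (star ((U _ : Matrix (Fin dA) (Fin dA) ℂ) a _))]
  have htr : M.trace = Fintype.card (Fin dA) := by
    have hcol : ∀ θ k, ∑ a, (U θ : Matrix (Fin dA) (Fin dA) ℂ) a k *
        star ((U θ : Matrix (Fin dA) (Fin dA) ℂ) a k) = 1 := fun θ k => by
      have h := congrFun (congrFun (mem_unitaryGroup_iff'.1 (U θ).2) k) k
      simpa [mul_apply, mul_comm] using h
    have hθ : ∀ θ, ∑ p : Fin dA × Fin dA, ∑ k, (U θ : Matrix (Fin dA) (Fin dA) ℂ) p.1 k *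
        (U θ : Matrix (Fin dA) (Fin dA) ℂ) p.2 k *
        (star ((U θ : Matrix (Fin dA) (Fin dA) ℂ) p.1 k) *
        star ((U θ : Matrix (Fin dA) (Fin dA) ℂ) p.2 k)) = dA := fun θ => by
      rw [Finset.sum_comm]
      simp only [mul_mul_mul_comm, Fintype.sum_prod_type, ← Finset.mul_sum, hcol, mul_one]
      simp
    simp only [trace, diag_apply, hMdef, of_apply]
    rw [← Finset.mul_sum, Finset.sum_comm, Finset.sum_congr rfl fun θ _ => hθ θ]
    simp [hcard]
  have havg : (Fintype.card Θ : ℂ)⁻¹ * ∑ θ, ∑ k : Fin dA,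
      pgTerm ρ (fun a => (U θ : Matrix (Fin dA) (Fin dA) ℂ) a k) =
      ∑ x : Fin dA × Fin dA, ∑ y : Fin dA × Fin dA, M (x.1, y.1) (x.2, y.2) *
        (mpow (ptraceA ρ) (-(1 / 2)) * blockB ρ x.2 x.1 * mpow (ptraceA ρ) (-(1 / 2)) *
          blockB ρ y.2 y.1).trace := by
    simp only [pgTerm_eq_sum, hMdef, of_apply]
    simp only [Finset.mul_sum, Finset.sum_mul]
    rw [Finset.sum_congr rfl fun θ _ => Finset.sum_comm, Finset.sum_comm]
    refine Finset.sum_congr rfl fun x _ => ?_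
    rw [Finset.sum_congr rfl fun θ _ => Finset.sum_comm, Finset.sum_comm]
    refine Finset.sum_congr rfl fun y _ => Finset.sum_congr rfl fun θ _ =>
      Finset.sum_congr rfl fun k _ => ?_
    ring
  have hone : ∑ a, ∑ b, (mpow (ptraceA ρ) (-(1 / 2)) * blockB ρ a a *
      mpow (ptraceA ρ) (-(1 / 2)) * blockB ρ b b).trace = 1 := by
    simp only [← trace_sum, ← Matrix.mul_sum, ← Matrix.sum_mul, ← ptraceA_eq_sum_blockB]
    rw [mpow_neg_half_sandwich hρB, Matrix.one_mul, ← hρtr]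
    simp only [trace, diag_apply, ptraceA, of_apply, Fintype.sum_prod_type]
    exact Finset.sum_comm
  rw [havg, trace_tildeRho_mul_self ρ hρB]
  simp only [eq_symmetrizer_of_twirl_invariant hMinv hl hr htr, Fintype.sum_prod_type,
    Fintype.card_fin, add_div, add_mul, Finset.sum_add_distrib, ite_and, ite_div, zero_div, ite_mul,
    zero_mul, Finset.sum_ite_irrel, Finset.sum_const_zero, Finset.sum_ite_eq, Finset.sum_ite_eq',
    Finset.mem_univ, if_true, one_div_mul_eq_div, ← Finset.sum_div, hone]

end
end
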